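/- Let R be a commutative ring and a, b ∈ R. Then the resultant of the polynomials p(X) = X⁴ − 2a·X² − 8b·X + a² and q(X) = 4X³ + 4a·X + 4b (with respect to degrees 4 and 3) equals 256·(4a³ + 27b²)², which equals Δ² where Δ = −16(4a³ + 27b²). -/

import Mathlib

open Polynomial

/-- The `(m + n) × (m + n)` Sylvester matrix of two polynomials `p` and `q`, taken with
respect to the degrees `m` and `n`: the first `n` rows contain the coefficients of `p`
(from degree `m` down to degree `0`, shifted), and the last `m` rows contain the
coefficients of `q` (from degree `n` down to degree `0`, shifted). -/
def sylvesterMatrix (R : Type*) [CommRing R] (m n : ℕ) (p q : Polynomial R) :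
    Matrix (Fin (n + m)) (Fin (n + m)) R :=
  Matrix.of fun i j =>
    if (i : ℕ) < n then
      if (i : ℕ) ≤ (j : ℕ) ∧ (j : ℕ) ≤ (i : ℕ) + m then p.coeff (m - ((j : ℕ) - (i : ℕ)))
      else 0
    else
      if (i : ℕ) - n ≤ (j : ℕ) ∧ (j : ℕ) ≤ ((i : ℕ) - n) + n then
        q.coeff (n - ((j : ℕ) - ((i : ℕ) - n)))
      else 0

/-- The resultant of two polynomials `p` and `q` with respect to the degrees `m` and `n`:
the determinant of their `(m + n) × (m + n)` Sylvester matrix. -/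
def resultant (R : Type*) [CommRing R] (m n : ℕ) (p q : Polynomial R) : R :=
  (sylvesterMatrix R m n p q).det

set_option maxHeartbeats 4000000 in
theorem lattes_matrix_aux (R : Type*) [CommRing R] (a b : R) :
    sylvesterMatrix R 4 3
        (X ^ 4 - C (2 * a) * X ^ 2 - C (8 * b) * X + C (a ^ 2))
        (C 4 * X ^ 3 + C (4 * a) * X + C (4 * b)) =
    !![1, 0, -(2*a), -(8*b), a^2, 0, 0;
       0, 1, 0, -(2*a), -(8*b), a^2, 0;
       0, 0, 1, 0, -(2*a), -(8*b), a^2;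
       4, 0, 4*a, 4*b, 0, 0, 0;
       0, 4, 0, 4*a, 4*b, 0, 0;
       0, 0, 4, 0, 4*a, 4*b, 0;
       0, 0, 0, 4, 0, 4*a, 4*b] := by
  ext i j
  fin_cases i <;> fin_cases j <;>
    simp [sylvesterMatrix, coeff_X, coeff_C, coeff_X_pow, coeff_C_mul, -map_mul, -map_pow]

set_option maxHeartbeats 4000000 in
/-- For any commutative ring `R` and `a, b ∈ R`, the resultant of
`p(X) = X⁴ - 2aX² - 8bX + a²` and `q(X) = 4X³ + 4aX + 4b` (with respect to degrees `4`
and `3`) equals `256 (4a³ + 27b²)² = Δ²`, where `Δ = -16(4a³ + 27b²)`. -/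
theorem resultant_lattes_numerator_denominator (R : Type*) [CommRing R] (a b : R) :
    resultant R 4 3
        (X ^ 4 - C (2 * a) * X ^ 2 - C (8 * b) * X + C (a ^ 2))
        (C 4 * X ^ 3 + C (4 * a) * X + C (4 * b)) =
      256 * (4 * a ^ 3 + 27 * b ^ 2) ^ 2 ∧
    (256 : R) * (4 * a ^ 3 + 27 * b ^ 2) ^ 2 = (-16 * (4 * a ^ 3 + 27 * b ^ 2)) ^ 2 := by
  refine ⟨?_, by ring⟩
  rw [_root_.resultant, lattes_matrix_aux]
  simp [Matrix.det_succ_row_zero, Fin.sum_univ_succ, Fin.succAbove]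
  ring
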